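/- arXiv:2602.19032 — 6 statements merged into one kernel-verified Lean document; each statement's English description precedes it below -/
import Mathlib

section
/- The function δ1(τ) = (θ2(0,τ)^4 + θ3(0,τ)^4)/8 is a modular form of weight 2 over the congruence subgroup Γ0(2): it is holomorphic on the upper half-plane, holomorphic at the cusps, and satisfies δ1((aτ+b)/(cτ+d)) = (cτ+d)^2 δ1(τ) for every (a b; c d) ∈ Γ0(2). -/
open Complex Real Matrix CongruenceSubgroup

local notation "SL(2,ℤ)" => Matrix.SpecialLinearGroup (Fin 2) ℤ
local notation "ℍ" => UpperHalfPlane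

/-- The nome `q = e^{2πiτ}`. -/
noncomputable def qq (τ : ℂ) : ℂ := Complex.exp (2 * π * Complex.I * τ)

/-- The half-nome `q^{1/2} = e^{πiτ}`. -/
noncomputable def qh (τ : ℂ) : ℂ := Complex.exp (π * Complex.I * τ)

/-- The Jacobi theta constant `θ₁(0,τ) = 2 q^{1/8} ∏_{j≥1} (1-q^j)(1+q^j)^2`. -/
noncomputable def theta1 (τ : ℂ) : ℂ :=
  2 * Complex.exp (π * Complex.I * τ / 4) *
    ∏' j : ℕ, ((1 - qq τ ^ (j + 1)) * (1 + qq τ ^ (j + 1)) ^ 2)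

/-- The Jacobi theta constant `θ₂(0,τ) = ∏_{j≥1} (1-q^j)(1-q^{j-1/2})^2`. -/
noncomputable def theta2 (τ : ℂ) : ℂ :=
  ∏' j : ℕ, ((1 - qq τ ^ (j + 1)) * (1 - qh τ ^ (2 * j + 1)) ^ 2)

/-- The Jacobi theta constant `θ₃(0,τ) = ∏_{j≥1} (1-q^j)(1+q^{j-1/2})^2`. -/
noncomputable def theta3 (τ : ℂ) : ℂ :=
  ∏' j : ℕ, ((1 - qq τ ^ (j + 1)) * (1 + qh τ ^ (2 * j + 1)) ^ 2)

/-- `δ₁(τ) = (θ₂(0,τ)⁴ + θ₃(0,τ)⁴)/8`. -/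
noncomputable def delta1 (τ : ℂ) : ℂ := (theta2 τ ^ 4 + theta3 τ ^ 4) / 8




namespace DeltaOne

/-- Euler's product. -/
noncomputable def P (q : ℂ) : ℂ := ∏' n : ℕ, (1 - q ^ (n + 1))

lemma P_ne_zero {q : ℂ} (hq : ‖q‖ < 1) : P q ≠ 0 := by
  unfold P
  have h := tprod_one_add_ne_zero_of_summable (f := fun n : ℕ => -q ^ (n + 1)) ?_ ?_
  · simpa [sub_eq_add_neg] using h
  · intro i hi
    have h1 : q ^ (i + 1) = 1 := by linear_combination -hi
    have h2 : ‖q‖ ^ (i + 1) = 1 := by rw [← norm_pow, h1, norm_one]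
    have h3 : ‖q‖ ^ (i + 1) < 1 := pow_lt_one₀ (norm_nonneg _) hq (by omega)
    linarith
  · simpa using (summable_nat_add_iff 1).mpr (summable_geometric_of_lt_one (norm_nonneg _) hq)

lemma mult_odd {x : ℂ} (hx : ‖x‖ < 1) : Multipliable fun j : ℕ => 1 - x ^ (2 * j + 1) := by
  apply multipliable_one_add_of_summable (f := fun n ↦ -x ^ (2 * n + 1))
  have h := (summable_nat_add_iff 1).mpr (summable_geometric_of_lt_one (norm_nonneg _) hx)
  have := h.comp_injective (i := fun j : ℕ => 2 * j) (fun a b h => by simpa using h)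
  simpa [Function.comp_def] using this

lemma mult_plus {x : ℂ} (hx : ‖x‖ < 1) : Multipliable fun j : ℕ => 1 + x ^ (j + 1) := by
  apply multipliable_one_add_of_summable (f := fun n ↦ x ^ (n + 1))
  simpa using (summable_nat_add_iff 1).mpr (summable_geometric_of_lt_one (norm_nonneg _) hx)

lemma sq_lt {x : ℂ} (hx : ‖x‖ < 1) : ‖x ^ 2‖ < 1 := by
  rw [norm_pow]; exact pow_lt_one₀ (norm_nonneg _) hx (by norm_num)

lemma P_split {x : ℂ} (hx : ‖x‖ < 1) : (∏' j : ℕ, (1 - x ^ (2 * j + 1))) * P (x ^ 2) = P x := by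
  have h2 := ModularForm.multipliable_one_sub_pow (sq_lt hx)
  have e : ∀ k : ℕ, 1 - (x ^ 2) ^ (k + 1) = 1 - x ^ (2 * k + 1 + 1) := fun k => by
    rw [← pow_mul]; ring_nf
  have := tprod_even_mul_odd (f := fun n : ℕ => 1 - x ^ (n + 1)) (mult_odd hx)
    (by simpa only [e] using h2)
  simp only [P, e]
  exact this

lemma P_plus {x : ℂ} (hx : ‖x‖ < 1) : (∏' j : ℕ, (1 + x ^ (j + 1))) * P x = P (x ^ 2) := by
  unfold P
  rw [← (mult_plus hx).tprod_mul (ModularForm.multipliable_one_sub_pow hx)]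
  apply tprod_congr
  intro j
  ring

lemma prod_minus {x : ℂ} (hx : ‖x‖ < 1) :
    (∏' j : ℕ, ((1 - (x ^ 2) ^ (j + 1)) * (1 - x ^ (2 * j + 1)) ^ 2)) = P x ^ 2 / P (x ^ 2) := by
  have h0 := P_ne_zero (sq_lt hx)
  rw [(ModularForm.multipliable_one_sub_pow (sq_lt hx)).tprod_mul ((mult_odd hx).pow 2),
    (mult_odd hx).tprod_pow, ← P_split hx]
  change P (x ^ 2) * _ = _
  field_simp

lemma prod_plus {x : ℂ} (hx : ‖x‖ < 1) :
    (∏' j : ℕ, ((1 - x ^ (j + 1)) * (1 + x ^ (j + 1)) ^ 2)) = P (x ^ 2) ^ 2 / P x := by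
  have h0 := P_ne_zero hx
  rw [(ModularForm.multipliable_one_sub_pow hx).tprod_mul ((mult_plus hx).pow 2),
    (mult_plus hx).tprod_pow, ← P_plus hx]
  change P x * _ = _
  field_simp

lemma qq_eq (z : ℂ) : qq z = qh z ^ 2 := by
  unfold qq qh
  rw [← Complex.exp_nat_mul]; congr 1; push_cast; ring

lemma norm_qh_eq (z : ℂ) : ‖qh z‖ = Real.exp (-π * z.im) := by
  unfold qh
  rw [Complex.norm_exp]; simp

lemma norm_qh {z : ℂ} (hz : 0 < z.im) : ‖qh z‖ < 1 := by
  rw [norm_qh_eq, Real.exp_lt_one_iff]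
  have := Real.pi_pos
  nlinarith

lemma norm_qq {z : ℂ} (hz : 0 < z.im) : ‖qq z‖ < 1 := by
  rw [qq_eq]; exact sq_lt (norm_qh hz)

lemma theta2_eq {z : ℂ} (hz : 0 < z.im) : theta2 z = P (qh z) ^ 2 / P (qh z ^ 2) := by
  unfold theta2
  simp only [qq_eq]
  exact prod_minus (norm_qh hz)

lemma theta3_eq {z : ℂ} (hz : 0 < z.im) : theta3 z = P (-qh z) ^ 2 / P (qh z ^ 2) := by
  unfold theta3
  have := prod_minus (x := -qh z) (by simpa using norm_qh hz)
  rw [neg_sq] at this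
  rw [← this]
  apply tprod_congr
  intro j
  rw [qq_eq, Odd.neg_pow (by simp), sub_neg_eq_add]

lemma theta1_eq {z : ℂ} (hz : 0 < z.im) : theta1 z =
    2 * Complex.exp (π * Complex.I * z / 4) * (P (qq z ^ 2) ^ 2 / P (qq z)) := by
  unfold theta1
  rw [prod_plus (norm_qq hz)]

lemma qh_add_one (z : ℂ) : qh (z + 1) = - qh z := by
  unfold qh
  rw [mul_add, Complex.exp_add, mul_one, Complex.exp_pi_mul_I]; ring

lemma qq_add_one (z : ℂ) : qq (z + 1) = qq z := by
  rw [qq_eq, qq_eq, qh_add_one, neg_sq]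

lemma T2 {z : ℂ} (hz : 0 < z.im) : theta2 (z + 1) ^ 4 = theta3 z ^ 4 := by
  rw [theta2_eq (by simpa using hz), theta3_eq hz, qh_add_one, neg_sq]

lemma T3 {z : ℂ} (hz : 0 < z.im) : theta3 (z + 1) ^ 4 = theta2 z ^ 4 := by
  rw [theta3_eq (by simpa using hz), theta2_eq hz, qh_add_one, neg_sq, neg_neg]

lemma exp_quarter (z : ℂ) : Complex.exp (π * Complex.I * z / 4) ^ 4 = qh z := by
  unfold qh
  rw [← Complex.exp_nat_mul]; congr 1; push_cast; ring

lemma theta1_pow {z : ℂ} (hz : 0 < z.im) : theta1 z ^ 4 =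
    16 * qh z * (P (qq z ^ 2) ^ 8 / P (qq z) ^ 4) := by
  rw [theta1_eq hz, mul_pow, mul_pow, exp_quarter]; ring

lemma T1 {z : ℂ} (hz : 0 < z.im) : theta1 (z + 1) ^ 4 = - theta1 z ^ 4 := by
  rw [theta1_pow hz, theta1_pow (by simpa using hz), qq_add_one, qh_add_one]; ring

lemma eta_eq (z : ℂ) : ModularForm.eta z =
    Complex.exp (2 * π * Complex.I * z / 24) * P (qq z) := by
  unfold ModularForm.eta P
  congr 1
  simp [ModularForm.eta_q_eq_pow, qq]

lemma theta2_eta {z : ℂ} (hz : 0 < z.im) :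
    theta2 z ^ 4 = ModularForm.eta (z / 2) ^ 8 / ModularForm.eta z ^ 4 := by
  have h0 := P_ne_zero (norm_qq hz)
  have e1 : qq (z / 2) = qh z := by unfold qq qh; congr 1; ring
  have e2 : Complex.exp (2 * π * Complex.I * (z / 2) / 24) ^ 8 =
      Complex.exp (2 * π * Complex.I * z / 24) ^ 4 := by
    rw [← Complex.exp_nat_mul, ← Complex.exp_nat_mul]; congr 1; push_cast; ring
  rw [theta2_eq hz, eta_eq, eta_eq, ← qq_eq, e1, mul_pow, mul_pow, e2]
  have := Complex.exp_ne_zero (2 * π * Complex.I * z / 24)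
  field_simp

lemma theta1_eta {z : ℂ} (hz : 0 < z.im) :
    theta1 z ^ 4 = 16 * ModularForm.eta (2 * z) ^ 8 / ModularForm.eta z ^ 4 := by
  have h0 := P_ne_zero (norm_qq hz)
  have e1 : qq (2 * z) = qq z ^ 2 := by
    unfold qq; rw [← Complex.exp_nat_mul]; congr 1; push_cast; ring
  have e2 : Complex.exp (2 * π * Complex.I * (2 * z) / 24) ^ 8 =
      qh z * Complex.exp (2 * π * Complex.I * z / 24) ^ 4 := by
    unfold qh
    rw [← Complex.exp_nat_mul, ← Complex.exp_nat_mul, ← Complex.exp_add]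
    congr 1; push_cast; ring
  rw [theta1_pow hz, eta_eq, eta_eq, e1, mul_pow, mul_pow, e2]
  have := Complex.exp_ne_zero (2 * π * Complex.I * z / 24)
  field_simp

lemma sqrt_pow_four (z : ℂ) (hz : z ≠ 0) : Complex.sqrt z ^ 4 = z ^ 2 := by
  rw [sqrt_eq_exp hz, ← Complex.exp_nat_mul]
  rw [show ((4 : ℕ) : ℂ) * (Complex.log z / 2) = (2 : ℕ) * Complex.log z by push_cast; ring,
    Complex.exp_nat_mul, Complex.exp_log hz]

lemma ne_zero_of_im {z : ℂ} (hz : 0 < z.im) : z ≠ 0 := by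
  rintro rfl; simp at hz

lemma eta_S {z : ℂ} (hz : 0 < z.im) :
    ModularForm.eta (-1 / z) ^ 4 = - z ^ 2 * ModularForm.eta z ^ 4 := by
  have h := ModularForm.eta_comp_eq_csqrt_I_inv (x := z) hz
  simp only [Function.comp, Pi.smul_apply, Pi.mul_apply, smul_eq_mul] at h
  rw [h, mul_pow, mul_pow, inv_pow, sqrt_pow_four _ Complex.I_ne_zero,
    sqrt_pow_four _ (ne_zero_of_im hz), Complex.I_sq]
  norm_num

lemma im_S {z : ℂ} (hz : 0 < z.im) : 0 < (-1 / z).im := by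
  have : (-1 / z).im = z.im / Complex.normSq z := by simp [neg_div]
  rw [this]
  exact div_pos hz (Complex.normSq_pos.mpr (ne_zero_of_im hz))

lemma S2 {z : ℂ} (hz : 0 < z.im) : theta2 (-1 / z) ^ 4 = - z ^ 2 * theta1 z ^ 4 := by
  have h0 := ne_zero_of_im hz
  have h1 : ModularForm.eta z ≠ 0 := ModularForm.eta_ne_zero hz
  have h2 : 0 < (2 * z).im := by simpa using hz
  rw [theta2_eta (im_S hz), theta1_eta hz, eta_S hz,
    show -1 / z / 2 = -1 / (2 * z) by field_simp, show 8 = 4 * 2 from rfl, pow_mul, eta_S h2]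
  field_simp
  ring

lemma S1 {z : ℂ} (hz : 0 < z.im) : theta1 (-1 / z) ^ 4 = - z ^ 2 * theta2 z ^ 4 := by
  have h0 := ne_zero_of_im hz
  have h := S2 (im_S hz)
  rw [show -1 / (-1 / z) = z by field_simp] at h
  rw [h]
  field_simp

lemma S3 {z : ℂ} (hz : 0 < z.im) : theta3 (-1 / z) ^ 4 = - z ^ 2 * theta3 z ^ 4 := by
  have h0 := ne_zero_of_im hz
  have hu : 0 < (z - 1).im := by simpa using hz
  have hu0 := ne_zero_of_im hu
  have hv : 0 < (-1 / (z - 1) - 1).im := by simpa using! im_S hu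
  have hv0 := ne_zero_of_im hv
  have a := S2 hv
  have b := T1 hv
  rw [sub_add_cancel, S1 hu] at b
  have c := T3 hu
  rw [sub_add_cancel] at c
  have d := T2 (im_S hz)
  have e : -1 / z + 1 = -1 / (-1 / (z - 1) - 1) := by
    have : -1 / (z - 1) - 1 = - z / (z - 1) := by field_simp; ring
    rw [this]; field_simp; ring
  rw [← d, e, a, c]
  have f : (-1 / (z - 1) - 1) * (z - 1) = - z := by field_simp; ring
  rw [← c] at b ⊢
  linear_combination (-(-1 / (z - 1) - 1) ^ 2) * b - theta3 z ^ 4 * ((-1 / (z - 1) - 1) * (z - 1) - z) * f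

open scoped ModularForm

/-- The three forms in the `SL(2,ℤ)`-orbit of `δ₁`, indexed by the bottom row modulo two. -/
noncomputable def D (c d : ZMod 2) (τ : ℍ) : ℂ :=
  if c = 0 then (if d = 0 then 0 else (theta2 τ ^ 4 + theta3 τ ^ 4) / 8)
  else (if d = 0 then -(theta1 τ ^ 4 + theta3 τ ^ 4) / 8 else (theta1 τ ^ 4 - theta2 τ ^ 4) / 8)

lemma zmod2 (c : ZMod 2) : c = 0 ∨ c = 1 := by revert c; decide

lemma D_S (c d : ZMod 2) : D c d ∣[(2 : ℤ)] ModularGroup.S = D d (-c) := by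
  ext τ
  rw [SlashInvariantForm.slash_S_apply]
  have h0 := τ.ne_zero
  have h1 := S1 τ.2
  have h2 := S2 τ.2
  have h3 := S3 τ.2
  have e : ((-(τ : ℂ))⁻¹) = -1 / (τ : ℂ) := by rw [inv_neg, neg_div, one_div]
  rcases zmod2 c with rfl | rfl <;> rcases zmod2 d with rfl | rfl <;>
    simp [D] <;> simp only [← inv_neg, e] <;> simp only [h1, h2, h3] <;> field_simp <;> ring

lemma D_T (c d : ZMod 2) : D c d ∣[(2 : ℤ)] ModularGroup.T = D c (c + d) := by
  ext τ
  rw [ModularForm.SL_slash_apply, UpperHalfPlane.modular_T_smul]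
  have h1 := T1 τ.2
  have h2 := T2 τ.2
  have h3 := T3 τ.2
  have e : (((1 : ℝ) +ᵥ τ : ℍ) : ℂ) = τ + 1 := by simp [add_comm]
  have hd : UpperHalfPlane.denom (ModularGroup.T : GL (Fin 2) ℝ) τ = 1 := by
    rw [UpperHalfPlane.denom]
    simp [Matrix.SpecialLinearGroup.map_apply_coe, ModularGroup.coe_T]
  rw [hd]
  rcases zmod2 c with rfl | rfl <;> rcases zmod2 d with rfl | rfl <;>
    simp [D, e, CharTwo.add_self_eq_zero] <;> simp only [h1, h2, h3] <;> ring

lemma D_step {g : SL(2,ℤ)} (hg : g = ModularGroup.S ∨ g = ModularGroup.T) (γ : SL(2,ℤ)) :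
    D (γ 1 0 : ℤ) (γ 1 1 : ℤ) ∣[(2 : ℤ)] g = D ((γ * g) 1 0 : ℤ) ((γ * g) 1 1 : ℤ) := by
  rcases hg with rfl | rfl
  · rw [D_S]
    simp [ModularGroup.coe_S, Matrix.SpecialLinearGroup.coe_mul, Matrix.mul_apply, Fin.sum_univ_two]
  · rw [D_T]
    simp [ModularGroup.coe_T, Matrix.SpecialLinearGroup.coe_mul, Matrix.mul_apply, Fin.sum_univ_two]

lemma D_slash (γ : SL(2,ℤ)) : D 0 1 ∣[(2 : ℤ)] γ = D (γ 1 0 : ℤ) (γ 1 1 : ℤ) := by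
  have : γ ∈ Subgroup.closure {ModularGroup.S, ModularGroup.T} := by
    simp [SpecialLinearGroup.SL2Z_generators]
  induction this using Subgroup.closure_induction_right with
  | one => simp
  | mul_right x hx y hy ih => rw [SlashAction.slash_mul, ih, D_step (by simpa using hy)]
  | mul_inv_cancel x hx y hy ih =>
    have h := D_step (g := y) (by simpa using hy) (x * y⁻¹)
    rw [inv_mul_cancel_right] at h
    rw [SlashAction.slash_mul, ih, ← h, ← SlashAction.slash_mul, mul_inv_cancel,
      SlashAction.slash_one]

lemma P_tendsto : Filter.Tendsto P (nhds 0) (nhds 1) := by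
  have h := (ModularForm.differentiableOn_tprod_one_sub_pow.differentiableAt
    (Metric.ball_mem_nhds 0 one_pos)).continuousAt
  have h1 : P 0 = 1 := by simp [P]
  rw [← h1]
  exact h

lemma qh_tendsto : Filter.Tendsto (fun τ : ℍ => qh τ) UpperHalfPlane.atImInfty (nhds 0) := by
  rw [tendsto_zero_iff_norm_tendsto_zero]
  simp only [norm_qh_eq]
  refine Real.tendsto_exp_atBot.comp ?_
  exact Filter.Tendsto.const_mul_atTop_of_neg (by simpa using Real.pi_pos) Filter.tendsto_comap

lemma lim2 : Filter.Tendsto (fun τ : ℍ => theta2 τ ^ 4) UpperHalfPlane.atImInfty (nhds 1) := by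
  have h2 : Filter.Tendsto (fun τ : ℍ => qh τ ^ 2) UpperHalfPlane.atImInfty (nhds 0) := by
    simpa using qh_tendsto.pow 2
  have := ((((P_tendsto.comp qh_tendsto).pow 2).div (P_tendsto.comp h2) one_ne_zero).pow 4)
  simp only [one_pow, div_one] at this
  exact this.congr fun τ => by rw [theta2_eq τ.2]; rfl

lemma lim3 : Filter.Tendsto (fun τ : ℍ => theta3 τ ^ 4) UpperHalfPlane.atImInfty (nhds 1) := by
  have h2 : Filter.Tendsto (fun τ : ℍ => qh τ ^ 2) UpperHalfPlane.atImInfty (nhds 0) := by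
    simpa using qh_tendsto.pow 2
  have h1 : Filter.Tendsto (fun τ : ℍ => - qh τ) UpperHalfPlane.atImInfty (nhds 0) := by
    simpa using qh_tendsto.neg
  have := ((((P_tendsto.comp h1).pow 2).div (P_tendsto.comp h2) one_ne_zero).pow 4)
  simp only [one_pow, div_one] at this
  exact this.congr fun τ => by rw [theta3_eq τ.2]; rfl

lemma lim1 : Filter.Tendsto (fun τ : ℍ => theta1 τ ^ 4) UpperHalfPlane.atImInfty (nhds 0) := by
  have h2 : Filter.Tendsto (fun τ : ℍ => qq τ) UpperHalfPlane.atImInfty (nhds 0) := by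
    simpa [qq_eq] using qh_tendsto.pow 2
  have h1 : Filter.Tendsto (fun τ : ℍ => qq τ ^ 2) UpperHalfPlane.atImInfty (nhds 0) := by
    simpa using h2.pow 2
  have := (qh_tendsto.const_mul 16).mul
    (((P_tendsto.comp h1).pow 8).div ((P_tendsto.comp h2).pow 4) (by simp))
  simp only [mul_zero, zero_mul] at this
  exact this.congr fun τ => by rw [theta1_pow τ.2]; rfl

lemma bdd_of_lim {f g : ℍ → ℂ} {a : ℂ} (hf : Filter.Tendsto f UpperHalfPlane.atImInfty (nhds a))
    (h : ∀ τ, f τ = g τ) : UpperHalfPlane.IsBoundedAtImInfty g := by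
  obtain rfl : f = g := funext h
  exact hf.isBigO_one ℝ

lemma D_bdd (c d : ZMod 2) : UpperHalfPlane.IsBoundedAtImInfty (D c d) := by
  rcases zmod2 c with rfl | rfl <;> rcases zmod2 d with rfl | rfl
  · exact bdd_of_lim (tendsto_const_nhds (x := (0 : ℂ))) fun τ => by simp [D]
  · exact bdd_of_lim ((lim2.add lim3).div_const 8) fun τ => by simp [D]
  · exact bdd_of_lim ((lim1.add lim3).neg.div_const 8) fun τ => by simp [D]
  · exact bdd_of_lim ((lim1.sub lim2).div_const 8) fun τ => by simp [D]

lemma diff2 {z : ℂ} (hz : 0 < z.im) : DifferentiableAt ℂ (fun z => theta2 z ^ 4) z := by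
  have h1 : DifferentiableAt ℂ (fun z => ModularForm.eta (z / 2) ^ 8 / ModularForm.eta z ^ 4) z := by
    have ha : DifferentiableAt ℂ (fun z => ModularForm.eta (z / 2)) z := by
      refine DifferentiableAt.comp (g := ModularForm.eta) z
        (ModularForm.differentiableAt_eta_of_mem_upperHalfPlaneSet ?_) (by fun_prop)
      change 0 < (z / 2).im
      simpa using hz
    exact (ha.pow 8).div
      ((ModularForm.differentiableAt_eta_of_mem_upperHalfPlaneSet hz).pow 4)
      (pow_ne_zero 4 (ModularForm.eta_ne_zero hz))
  refine h1.congr_of_eventuallyEq ?_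
  filter_upwards [UpperHalfPlane.isOpen_upperHalfPlaneSet.mem_nhds hz] with w hw
  exact theta2_eta hw

lemma diff3 {z : ℂ} (hz : 0 < z.im) : DifferentiableAt ℂ (fun z => theta3 z ^ 4) z := by
  have h1 : DifferentiableAt ℂ (fun z => theta2 (z + 1) ^ 4) z :=
    DifferentiableAt.comp (g := fun z => theta2 z ^ 4) z (diff2 (by simpa using hz)) (by fun_prop)
  refine h1.congr_of_eventuallyEq ?_
  filter_upwards [UpperHalfPlane.isOpen_upperHalfPlaneSet.mem_nhds hz] with w hw
  exact (T2 hw).symm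

lemma D_eq (τ : ℍ) : D 0 1 τ = delta1 τ := by simp [D, delta1]

end DeltaOne

open DeltaOne in
/-- `δ₁` is a modular form of weight `2` over `Γ₀(2)`: there is a modular form of weight `2`
over `Γ₀(2)` (holomorphic on `ℍ`, holomorphic at the cusps, transforming with weight `2` under
`Γ₀(2)`) that coincides with `δ₁` on the upper half-plane. -/
theorem delta1_modular_form_weight_two_Gamma0_two :
    ∃ F : ModularForm (Gamma0 2) 2, ∀ τ : ℍ, F τ = delta1 (τ : ℂ) := by
  refine ⟨{ toFun := D 0 1, slash_action_eq' := ?_, holo' := ?_, bdd_at_cusps' := ?_ }, D_eq⟩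
  · rintro A ⟨γ, hγ, rfl⟩
    have h0 : ((γ 1 0 : ℤ) : ZMod 2) = 0 := Gamma0_mem.mp hγ
    have h := D_slash γ
    rw [h0] at h
    have h1 : ((γ 1 1 : ℤ) : ZMod 2) = 1 := by
      have := γ.det_coe
      rw [Matrix.det_fin_two] at this
      have := congrArg (Int.cast : ℤ → ZMod 2) this
      push_cast at this
      rw [h0] at this
      rcases zmod2 ((γ 1 1 : ℤ) : ZMod 2) with h | h
      · simp [h] at this
      · exact h
    rw [h1] at h
    exact h
  · change MDifferentiable _ _ (D 0 1)
    rw [UpperHalfPlane.mdifferentiable_iff]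
    refine DifferentiableOn.congr (f := delta1) (fun z hz => ?_) fun z hz => ?_
    · exact (((diff2 hz).add (diff3 hz)).div_const 8).differentiableWithinAt
    · simp only [Function.comp, D_eq, UpperHalfPlane.ofComplex_apply_of_im_pos hz]
  · intro c hc
    rw [Subgroup.IsArithmetic.isCusp_iff_isCusp_SL2Z] at hc
    rw [OnePoint.isBoundedAt_iff_forall_SL2Z hc]
    intro γ _
    have h := D_bdd (γ 1 0 : ℤ) (γ 1 1 : ℤ)
    rw [← D_slash] at h
    exact h
end

section
/- The function ε1(τ) = θ2(0,τ)^4 θ3(0,τ)^4/16 is a modular form of weight 4 over the congruence subgroup Γ0(2): it is holomorphic on the upper half-plane, holomorphic at the cusps, and satisfies ε1((aτ+b)/(cτ+d)) = (cτ+d)^4 ε1(τ) for every (a b; c d) ∈ Γ0(2). -/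
open Complex Real Matrix CongruenceSubgroup

local notation "SL(2,ℤ)" => Matrix.SpecialLinearGroup (Fin 2) ℤ
local notation "ℍ" => UpperHalfPlane

/-- `ε₁(τ) = θ₂(0,τ)⁴ θ₃(0,τ)⁴/16`. -/
noncomputable def epsilon1 (τ : ℂ) : ℂ := theta2 τ ^ 4 * theta3 τ ^ 4 / 16

open scoped ModularForm

/-- Euler's function `φ(q) = ∏ (1 - q^(n+1))`. -/
noncomputable def eulerPhi (q : ℂ) : ℂ := ∏' n : ℕ, (1 - q ^ (n + 1))

lemma multipliable_one_add_mul_pow (c : ℂ) {q : ℂ} (hq : ‖q‖ < 1) (g : ℕ → ℕ)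
    (hg : Function.Injective g) : Multipliable fun n : ℕ ↦ 1 + c * q ^ g n := by
  apply multipliable_one_add_of_summable (f := fun n ↦ c * q ^ g n)
  have h := (summable_geometric_of_lt_one (norm_nonneg _) hq).comp_injective hg
  simpa [Function.comp_def] using h.mul_left ‖c‖

lemma eulerPhi_ne_zero {q : ℂ} (hq : ‖q‖ < 1) : eulerPhi q ≠ 0 := by
  unfold eulerPhi
  refine tprod_one_add_ne_zero_of_summable (f := fun n ↦ -q ^ (n + 1)) ?_ ?_
  · intro i h
    have h1 : q ^ (i + 1) = 1 := by linear_combination -h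
    have h2 : ‖q‖ ^ (i + 1) = 1 := by rw [← norm_pow, h1, norm_one]
    have := pow_lt_one₀ (norm_nonneg q) hq (Nat.succ_ne_zero i)
    simp only [Nat.succ_eq_add_one] at this
    linarith
  · simpa using (summable_nat_add_iff 1).mpr (summable_geometric_of_lt_one (norm_nonneg _) hq)

lemma eulerPhi_split {q : ℂ} (hq : ‖q‖ < 1) :
    (∏' j : ℕ, (1 - q ^ (2 * j + 1))) * eulerPhi (q ^ 2) = eulerPhi q := by
  have h1 := multipliable_one_add_mul_pow (-1) hq (fun j ↦ 2 * j + 1) (fun a b h ↦ by grind)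
  have h2 := multipliable_one_add_mul_pow (-1) hq (fun j ↦ 2 * j + 1 + 1) (fun a b h ↦ by grind)
  have h := tprod_even_mul_odd (f := fun n ↦ 1 + (-1) * q ^ (n + 1)) h1 h2
  unfold eulerPhi
  simp only [neg_mul, one_mul, ← sub_eq_add_neg] at h
  rw [← h]
  congr 2
  ext j
  rw [← pow_mul]
  ring_nf

lemma norm_qh_lt (τ : ℍ) : ‖qh τ‖ < 1 := by
  have := τ.im_pos
  simp only [qh, Complex.norm_exp]
  simp
  positivity

lemma qq_eq (τ : ℂ) : qq τ = qh τ ^ 2 := by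
  simp only [qq, qh, ← Complex.exp_nat_mul]
  congr 1
  push_cast
  ring

lemma theta_mul (τ : ℍ) :
    theta2 τ * theta3 τ * eulerPhi (qq τ ^ 2) ^ 2 = eulerPhi (qq τ) ^ 4 := by
  have hh := norm_qh_lt τ
  have hq : ‖qq τ‖ < 1 := by
    rw [qq_eq, norm_pow]; exact pow_lt_one₀ (norm_nonneg _) hh two_ne_zero
  have m0 := multipliable_one_add_mul_pow (-1) hq (fun j ↦ j + 1) (fun a b h ↦ by grind)
  have m1 := multipliable_one_add_mul_pow (-1) hh (fun j ↦ 2 * j + 1) (fun a b h ↦ by grind)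
  have m2 := multipliable_one_add_mul_pow 1 hh (fun j ↦ 2 * j + 1) (fun a b h ↦ by grind)
  simp only [neg_mul, one_mul, ← sub_eq_add_neg] at m0 m1 m2
  have e2 : theta2 τ = eulerPhi (qq τ) * (∏' j : ℕ, (1 - qh τ ^ (2 * j + 1))) ^ 2 := by
    rw [theta2, m0.tprod_mul (m1.pow 2), m1.tprod_pow]; rfl
  have e3 : theta3 τ = eulerPhi (qq τ) * (∏' j : ℕ, (1 + qh τ ^ (2 * j + 1))) ^ 2 := by
    rw [theta3, m0.tprod_mul (m2.pow 2), m2.tprod_pow]; rfl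
  have e4 : (∏' j : ℕ, (1 - qh τ ^ (2 * j + 1))) * (∏' j : ℕ, (1 + qh τ ^ (2 * j + 1)))
      = ∏' j : ℕ, (1 - qq τ ^ (2 * j + 1)) := by
    rw [← m1.tprod_mul m2]
    congr 1
    ext j
    rw [qq_eq]
    ring
  have e5 := eulerPhi_split hq
  rw [e2, e3]
  linear_combination (eulerPhi (qq τ)) ^ 2 * eulerPhi (qq τ ^ 2) ^ 2 *
    ((∏' j : ℕ, (1 - qh τ ^ (2 * j + 1))) * (∏' j : ℕ, (1 + qh τ ^ (2 * j + 1))) +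
      ∏' j : ℕ, (1 - qq τ ^ (2 * j + 1))) * e4 + eulerPhi (qq τ) ^ 2 *
      ((∏' j : ℕ, (1 - qq τ ^ (2 * j + 1))) * eulerPhi (qq τ ^ 2) + eulerPhi (qq τ)) * e5

lemma norm_qq_lt (τ : ℍ) : ‖qq τ‖ < 1 := by
  rw [qq_eq, norm_pow]; exact pow_lt_one₀ (norm_nonneg _) (norm_qh_lt τ) two_ne_zero

/-- `ε₁` in terms of Euler's function. -/
lemma epsilon1_eq_phi (τ : ℍ) :
    epsilon1 τ = eulerPhi (qq τ) ^ 16 / eulerPhi (qq τ ^ 2) ^ 8 / 16 := by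
  have h := theta_mul τ
  have hne : eulerPhi (qq τ ^ 2) ≠ 0 := eulerPhi_ne_zero (by
    rw [norm_pow]; exact pow_lt_one₀ (norm_nonneg _) (norm_qq_lt τ) two_ne_zero)
  rw [epsilon1, ← mul_pow, show eulerPhi (qq τ) ^ 16 = (eulerPhi (qq τ) ^ 4) ^ 4 by ring, ← h]
  field_simp

lemma eta_pow_eight (τ : ℂ) :
    ModularForm.eta τ ^ 8 = Complex.exp (2 * π * I * τ / 3) * eulerPhi (qq τ) ^ 8 := by
  simp only [ModularForm.eta, eulerPhi, ModularForm.eta_q, Function.Periodic.qParam, qq, mul_pow,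
    ← Complex.exp_nat_mul]
  congr 2
  · push_cast; ring
  · simp

lemma epsilon1_eq_eta (τ : ℍ) :
    epsilon1 τ = ModularForm.eta τ ^ 16 / ModularForm.eta (2 * τ) ^ 8 / 16 := by
  rw [epsilon1_eq_phi, show ModularForm.eta τ ^ 16 = (ModularForm.eta τ ^ 8) ^ 2 by ring,
    eta_pow_eight, eta_pow_eight, mul_pow, ← Complex.exp_nat_mul,
    show qq (2 * τ) = qq τ ^ 2 by
      simp only [qq, ← Complex.exp_nat_mul]; congr 1; push_cast; ring,
    show ((2 : ℕ) : ℂ) * (2 * π * I * τ / 3) = 2 * π * I * (2 * τ) / 3 by push_cast; ring]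
  have := Complex.exp_ne_zero (2 * π * I * (2 * τ) / 3)
  rw [mul_div_mul_left _ _ this]
  ring

/-- `ε₁` as a function on the upper half-plane. -/
noncomputable def eps (τ : ℍ) : ℂ := epsilon1 τ

/-- The transform of `ε₁` under `S`. -/
noncomputable def epsS (τ : ℍ) : ℂ :=
  qh τ * (eulerPhi (qh τ ^ 2) ^ 16 / eulerPhi (qh τ) ^ 8)

lemma eta_S_pow_eight (τ : ℂ) (hτ : 0 < τ.im) :
    ModularForm.eta (-1 / τ) ^ 8 = τ ^ 4 * ModularForm.eta τ ^ 8 := by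
  have h : ModularForm.eta (-1 / τ) = (sqrt I)⁻¹ * (sqrt τ * ModularForm.eta τ) :=
    ModularForm.eta_comp_eq_csqrt_I_inv hτ
  have hs (z : ℂ) : sqrt z ^ 8 = z ^ 4 := by
    have : sqrt z ^ 2 = z := by simp [Complex.sqrt]
    calc sqrt z ^ 8 = (sqrt z ^ 2) ^ 4 := by ring
      _ = _ := by rw [this]
  rw [h, mul_pow, mul_pow, inv_pow, hs, hs, I_pow_four]
  ring

lemma eps_S : eps ∣[(4 : ℤ)] ModularGroup.S = epsS := by
  ext τ
  have hτ := τ.ne_zero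
  have hτ2 : 0 < ((τ : ℂ) / 2).im := by simpa using τ.im_pos
  rw [ModularForm.SL_slash_apply, UpperHalfPlane.modular_S_smul, ModularGroup.denom_S, eps,
    epsilon1_eq_eta]
  change ModularForm.eta (-(τ : ℂ))⁻¹ ^ 16 / ModularForm.eta (2 * (-(τ : ℂ))⁻¹) ^ 8 / 16 *
    (τ : ℂ) ^ (-4 : ℤ) = epsS τ
  rw [show (-(τ : ℂ))⁻¹ = -1 / τ by field_simp, show 2 * (-1 / (τ : ℂ)) = -1 / (τ / 2) by field_simp,
    show ModularForm.eta (-1 / τ) ^ 16 = (ModularForm.eta (-1 / τ) ^ 8) ^ 2 by ring,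
    eta_S_pow_eight _ τ.im_pos, eta_S_pow_eight _ hτ2, eta_pow_eight, eta_pow_eight, epsS,
    show qq (τ / 2) = qh τ by simp only [qq, qh]; congr 1; ring, ← qq_eq]
  have hne := eulerPhi_ne_zero (norm_qh_lt τ)
  have he : Complex.exp (2 * π * I * τ / 3) ^ 2 =
      qh τ * Complex.exp (2 * π * I * (τ / 2) / 3) := by
    rw [qh, ← Complex.exp_add, ← Complex.exp_nat_mul]
    congr 1
    push_cast
    ring
  have hn2 := Complex.exp_ne_zero (2 * π * I * (τ / 2) / 3)
  rw [mul_pow, mul_pow, he]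
  simp only [_root_.zpow_neg, zpow_ofNat]
  field_simp
  ring

lemma denom_T_eq (τ : ℂ) : UpperHalfPlane.denom ModularGroup.T τ = 1 := by
  simp [UpperHalfPlane.denom, ModularGroup.coe_T]

lemma eps_T : eps ∣[(4 : ℤ)] ModularGroup.T = eps := by
  ext τ
  rw [ModularForm.SL_slash_apply, UpperHalfPlane.modular_T_smul, eps, eps, epsilon1_eq_phi,
    epsilon1_eq_phi]
  have : qq (((1 : ℝ) +ᵥ τ : ℍ) : ℂ) = qq τ := by
    simp only [qq, UpperHalfPlane.coe_vadd]
    rw [← Complex.exp_periodic (2 * π * I * τ)]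
    congr 1
    push_cast
    ring
  rw [this]
  simp [denom_T_eq]

lemma epsS_TT : (epsS ∣[(4 : ℤ)] ModularGroup.T) ∣[(4 : ℤ)] ModularGroup.T = epsS := by
  ext τ
  rw [ModularForm.SL_slash_apply, ModularForm.SL_slash_apply, UpperHalfPlane.modular_T_smul,
    UpperHalfPlane.modular_T_smul]
  have : qh (((1 : ℝ) +ᵥ ((1 : ℝ) +ᵥ τ) : ℍ) : ℂ) = qh τ := by
    simp only [qh, UpperHalfPlane.coe_vadd]
    rw [← Complex.exp_periodic (π * I * τ)]
    congr 1
    push_cast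
    ring
  rw [epsS, this, epsS]
  simp [denom_T_eq]

lemma epsS_S : epsS ∣[(4 : ℤ)] ModularGroup.S = eps := by
  rw [← eps_S, ← SlashAction.slash_mul]
  have : ModularGroup.S * ModularGroup.S = (-1 : SL(2,ℤ)) := by decide
  rw [this]
  ext τ
  rw [ModularForm.SL_slash_apply]
  simp [UpperHalfPlane.denom]
  norm_num

/-- The third conjugate. -/
noncomputable def epsST : ℍ → ℂ := epsS ∣[(4 : ℤ)] ModularGroup.T

lemma slash_inv_of {f g : ℍ → ℂ} {γ : SL(2,ℤ)} (h : f ∣[(4 : ℤ)] γ = g) :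
    g ∣[(4 : ℤ)] γ⁻¹ = f := by
  rw [← h, ← SlashAction.slash_mul, mul_inv_cancel, SlashAction.slash_one]

lemma epsST_S : epsST ∣[(4 : ℤ)] ModularGroup.S = epsST := by
  have h : ModularGroup.S * ModularGroup.T * ModularGroup.S =
    ModularGroup.T⁻¹ * ModularGroup.S * ModularGroup.T⁻¹ := by decide
  have h2 : epsS ∣[(4 : ℤ)] ModularGroup.T⁻¹ = epsST := slash_inv_of epsS_TT
  conv_lhs => rw [epsST, ← eps_S, ← SlashAction.slash_mul, ← SlashAction.slash_mul, ← mul_assoc, h,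
    SlashAction.slash_mul, SlashAction.slash_mul, slash_inv_of eps_T, eps_S, h2]

lemma eps_slash (γ : SL(2,ℤ)) :
    (Even (γ 1 0) → eps ∣[(4 : ℤ)] γ = eps) ∧
    (¬ Even (γ 1 0) → Even (γ 1 1) → eps ∣[(4 : ℤ)] γ = epsS) ∧
    (¬ Even (γ 1 0) → ¬ Even (γ 1 1) → eps ∣[(4 : ℤ)] γ = epsST) := by
  have hd (γ : SL(2,ℤ)) : γ 0 0 * γ 1 1 - γ 0 1 * γ 1 0 = 1 := by
    rw [← Matrix.det_fin_two]; exact γ.2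
  have hn (γ : SL(2,ℤ)) (h : Even (γ 1 0)) : ¬ Even (γ 1 1) := by
    intro h'
    have h1 := (h'.mul_left (γ 0 0)).sub (h.mul_left (γ 0 1))
    rw [hd] at h1
    exact absurd h1 (by decide)
  have hγ : γ ∈ Subgroup.closure {ModularGroup.S, ModularGroup.T} := by
    simp [SpecialLinearGroup.SL2Z_generators]
  have T1 : epsS ∣[(4 : ℤ)] ModularGroup.T = epsST := rfl
  have T2 : epsST ∣[(4 : ℤ)] ModularGroup.T = epsS := epsS_TT
  induction hγ using Subgroup.closure_induction_right with
  | one => simp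
  | mul_right x hx y hy ih =>
    have hnx := hn x
    obtain ⟨i1, i2, i3⟩ := ih
    simp only [SlashAction.slash_mul]
    rcases hy with rfl | rfl
    · have c0 : (x * ModularGroup.S) 1 0 = x 1 1 := by
        simp [ModularGroup.coe_S, Matrix.mul_apply, Fin.sum_univ_two]
      have c1 : (x * ModularGroup.S) 1 1 = - x 1 0 := by
        simp [ModularGroup.coe_S, Matrix.mul_apply, Fin.sum_univ_two]
      rw [c0, c1, even_neg]
      grind [eps_S, epsS_S, epsST_S]
    · have c0 : (x * ModularGroup.T) 1 0 = x 1 0 := by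
        simp [ModularGroup.coe_T, Matrix.mul_apply, Fin.sum_univ_two]
      have c1 : (x * ModularGroup.T) 1 1 = x 1 0 + x 1 1 := by
        simp [ModularGroup.coe_T, Matrix.mul_apply, Fin.sum_univ_two]
      rw [c0, c1, Int.even_add]
      grind [eps_T]
  | mul_inv_cancel x hx y hy ih =>
    have hnx := hn x
    obtain ⟨i1, i2, i3⟩ := ih
    simp only [SlashAction.slash_mul]
    rcases hy with rfl | rfl
    · have c0 : (x * ModularGroup.S⁻¹) 1 0 = - x 1 1 := by
        simp [ModularGroup.S_inv, ModularGroup.coe_S, Matrix.mul_apply, Fin.sum_univ_two]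
      have c1 : (x * ModularGroup.S⁻¹) 1 1 = x 1 0 := by
        simp [ModularGroup.S_inv, ModularGroup.coe_S, Matrix.mul_apply, Fin.sum_univ_two]
      have a1 := slash_inv_of eps_S
      have a2 := slash_inv_of epsS_S
      have a3 := slash_inv_of epsST_S
      rw [c0, c1, even_neg]
      grind
    · have c0 : (x * ModularGroup.T⁻¹) 1 0 = x 1 0 := by
        rw [Matrix.SpecialLinearGroup.coe_mul, ModularGroup.coe_T_inv]
        simp [ Matrix.mul_apply, Fin.sum_univ_two]
      have c1 : (x * ModularGroup.T⁻¹) 1 1 = - x 1 0 + x 1 1 := by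
        rw [Matrix.SpecialLinearGroup.coe_mul, ModularGroup.coe_T_inv]
        simp [ Matrix.mul_apply, Fin.sum_univ_two]
      have a1 := slash_inv_of eps_T
      have a2 := slash_inv_of T1
      have a3 := slash_inv_of T2
      rw [c0, c1, Int.even_add, even_neg]
      grind

lemma continuousAt_eulerPhi : ContinuousAt eulerPhi 0 :=
  (ModularForm.differentiableOn_tprod_one_sub_pow.differentiableAt
    (Metric.ball_mem_nhds 0 one_pos)).continuousAt

lemma tendsto_qh : Filter.Tendsto (fun τ : ℍ ↦ qh τ) UpperHalfPlane.atImInfty (nhds 0) := by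
  refine (UpperHalfPlane.qParam_tendsto_atImInfty (h := 2) two_pos).congr fun τ ↦ ?_
  simp only [Function.Periodic.qParam, qh]
  congr 1
  push_cast
  ring

lemma eulerPhi_zero : eulerPhi 0 ≠ 0 := eulerPhi_ne_zero (by simp)

lemma continuousAt_quot :
    ContinuousAt (fun q ↦ eulerPhi (q ^ 2) ^ 16 / eulerPhi q ^ 8) 0 ∧
    ContinuousAt (fun q ↦ eulerPhi q ^ 16 / eulerPhi (q ^ 2) ^ 8 / 16) 0 := by
  have h0 := continuousAt_eulerPhi
  have h1 : ContinuousAt (fun q : ℂ ↦ eulerPhi (q ^ 2)) 0 :=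
    ContinuousAt.comp (f := fun q : ℂ ↦ q ^ 2) (g := eulerPhi) (by simpa using h0) (by fun_prop)
  exact ⟨(h1.pow 16).div (h0.pow 8) (pow_ne_zero _ eulerPhi_zero),
    ((h0.pow 16).div (h1.pow 8) (pow_ne_zero _ (by simpa using eulerPhi_zero))).div_const 16⟩

lemma eps_bdd : UpperHalfPlane.IsBoundedAtImInfty eps := by
  have hq : Filter.Tendsto (fun τ : ℍ ↦ qq τ) UpperHalfPlane.atImInfty (nhds 0) := by
    simpa [qq_eq] using tendsto_qh.pow 2
  have h := continuousAt_quot.2.tendsto.comp hq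
  refine Filter.Tendsto.isBigO_one ℝ (h.congr fun τ ↦ ?_)
  exact (epsilon1_eq_phi τ).symm

lemma epsS_bdd : UpperHalfPlane.IsBoundedAtImInfty epsS :=
  Filter.Tendsto.isBigO_one ℝ (tendsto_qh.mul (continuousAt_quot.1.tendsto.comp tendsto_qh))

lemma epsST_bdd : UpperHalfPlane.IsBoundedAtImInfty epsST := by
  rw [epsST, ModularForm.SL_slash]
  exact epsS_bdd.slash _ (by simp [ModularGroup.coe_T])

lemma eps_slash_bdd (γ : SL(2,ℤ)) : UpperHalfPlane.IsBoundedAtImInfty (eps ∣[(4 : ℤ)] γ) := by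
  obtain ⟨h1, h2, h3⟩ := eps_slash γ
  by_cases hc : Even (γ 1 0)
  · rw [h1 hc]; exact eps_bdd
  · by_cases hd : Even (γ 1 1)
    · rw [h2 hc hd]; exact epsS_bdd
    · rw [h3 hc hd]; exact epsST_bdd

lemma eps_holo : MDifferentiable (modelWithCornersSelf ℂ ℂ) (modelWithCornersSelf ℂ ℂ) eps := by
  rw [UpperHalfPlane.mdifferentiable_iff]
  refine DifferentiableOn.congr (f := fun z ↦
    ModularForm.eta z ^ 16 / ModularForm.eta (2 * z) ^ 8 / 16) ?_ ?_
  · intro z hz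
    have hz2 : 2 * z ∈ UpperHalfPlane.upperHalfPlaneSet := by
      simpa [UpperHalfPlane.upperHalfPlaneSet] using hz
    refine DifferentiableAt.differentiableWithinAt ?_
    have h1 := ModularForm.differentiableAt_eta_of_mem_upperHalfPlaneSet hz
    have h2 : DifferentiableAt ℂ (fun z ↦ ModularForm.eta (2 * z)) z :=
      DifferentiableAt.comp z (g := ModularForm.eta) (f := fun z ↦ 2 * z)
        (ModularForm.differentiableAt_eta_of_mem_upperHalfPlaneSet hz2) (by fun_prop)
    exact ((h1.pow 16).div (h2.pow 8) (pow_ne_zero _ (ModularForm.eta_ne_zero hz2))).div_const 16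
  · intro z hz
    simp only [Function.comp_apply, UpperHalfPlane.ofComplex_apply_of_im_pos hz, eps]
    exact epsilon1_eq_eta ⟨z, hz⟩

/-- `ε₁` is a modular form of weight `4` over `Γ₀(2)`: there is a modular form of weight `4`
over `Γ₀(2)` (holomorphic on `ℍ`, holomorphic at the cusps, transforming with weight `4` under
`Γ₀(2)`) that coincides with `ε₁` on the upper half-plane. -/
theorem epsilon1_modular_form_weight_four_Gamma0_two :
    ∃ F : ModularForm (Gamma0 2) 4, ∀ τ : ℍ, F τ = epsilon1 (τ : ℂ) := by
  refine ⟨{ toFun := eps, slash_action_eq' := ?_, holo' := eps_holo, bdd_at_cusps' := ?_ },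
    fun τ ↦ rfl⟩
  · rintro _ ⟨γ, hγ, rfl⟩
    refine (eps_slash γ).1 ?_
    have := Gamma0_mem.mp hγ
    exact (ZMod.intCast_eq_zero_iff_even).mp this
  · intro c hc
    rw [Subgroup.IsArithmetic.isCusp_iff_isCusp_SL2Z] at hc
    rw [OnePoint.isBoundedAt_iff_forall_SL2Z hc]
    exact fun γ _ ↦ eps_slash_bdd γ
end

section
/- The function ε2(τ) = θ1(0,τ)^4 θ3(0,τ)^4/16 is a modular form of weight 4 over the congruence subgroup Γ^0(2): it is holomorphic on the upper half-plane, holomorphic at the cusps, and satisfies ε2((aτ+b)/(cτ+d)) = (cτ+d)^4 ε2(τ) for every (a b; c d) ∈ Γ^0(2). -/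
open Complex Real Matrix Matrix.SpecialLinearGroup

local notation "SL(2,ℤ)" => Matrix.SpecialLinearGroup (Fin 2) ℤ
local notation "ℍ" => UpperHalfPlane

/-- `ε₂(τ) = θ₁(0,τ)⁴ θ₃(0,τ)⁴/16`. -/
noncomputable def epsilon2 (τ : ℂ) : ℂ := theta1 τ ^ 4 * theta3 τ ^ 4 / 16

/-- `Γ^0(N)`: the congruence subgroup of `SL(2, ℤ)` of matrices whose upper right-hand entry
reduces to zero modulo `N`. -/
def GammaUpper0 (N : ℕ) : Subgroup SL(2,ℤ) where
  carrier := { g | (g 0 1 : ZMod N) = 0 }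
  one_mem' := by simp
  mul_mem' := by
    intro a b ha hb
    simp only [Set.mem_setOf_eq]
    have h := (Matrix.two_mul_expl a.1 b.1).2.1
    simp only [coe_matrix_coe, coe_mul, Int.coe_castRingHom, map_apply, Set.mem_setOf_eq] at *
    rw [h]
    simp [ha, hb]
  inv_mem' := by
    intro a ha
    simp only [Set.mem_setOf_eq]
    rw [SL2_inv_expl a]
    simp only [cons_val_zero, cons_val_one, head_cons, coe_matrix_coe,
      coe_mk, Int.coe_castRingHom, map_apply, Int.cast_neg, neg_eq_zero, Set.mem_setOf_eq] at *
    exact ha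



namespace EpsTwo

open UpperHalfPlane Filter Topology ModularForm

/-- `∏ (1 - x^(n+1))` -/
noncomputable def PP (x : ℂ) : ℂ := ∏' n : ℕ, (1 - x ^ (n + 1))

/-- `∏ (1 - x^(2n+1))` -/
noncomputable def OO (x : ℂ) : ℂ := ∏' n : ℕ, (1 - x ^ (2 * n + 1))

lemma sum_pow_succ {x : ℂ} (hx : ‖x‖ < 1) : Summable fun n : ℕ => ‖x ^ (n + 1)‖ := by
  simpa using (summable_nat_add_iff 1).mpr (summable_geometric_of_lt_one (norm_nonneg _) hx)

lemma sum_pow_odd {x : ℂ} (hx : ‖x‖ < 1) : Summable fun n : ℕ => ‖x ^ (2 * n + 1)‖ := by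
  have h := (sum_pow_succ hx).comp_injective (i := fun n : ℕ => 2 * n)
    (fun a b h => by simpa using h)
  simpa [Function.comp_def] using h

lemma mul_OO {x : ℂ} (hx : ‖x‖ < 1) : Multipliable fun n : ℕ => 1 - x ^ (2 * n + 1) := by
  apply multipliable_one_add_of_summable (f := fun n : ℕ => - x ^ (2 * n + 1))
  simpa using sum_pow_odd hx

lemma mul_plus {x : ℂ} (hx : ‖x‖ < 1) : Multipliable fun n : ℕ => 1 + x ^ (n + 1) :=
  multipliable_one_add_of_summable (f := fun n : ℕ => x ^ (n + 1)) (sum_pow_succ hx)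

lemma sq_lt {x : ℂ} (hx : ‖x‖ < 1) : ‖x ^ 2‖ < 1 := by
  rw [norm_pow]; exact pow_lt_one₀ (norm_nonneg _) hx two_ne_zero

lemma neg_lt' {x : ℂ} (hx : ‖x‖ < 1) : ‖-x‖ < 1 := by simpa using hx

lemma PP_eq {x : ℂ} (hx : ‖x‖ < 1) : PP x = OO x * PP (x ^ 2) := by
  have ho : (fun k : ℕ => 1 - x ^ (2 * k + 1 + 1)) = fun k : ℕ => 1 - (x ^ 2) ^ (k + 1) := by
    funext k
    rw [← pow_mul, show 2 * k + 1 + 1 = 2 * (k + 1) by omega]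
  have hm := multipliable_one_sub_pow (sq_lt hx)
  rw [← ho] at hm
  have h := tprod_even_mul_odd (f := fun n : ℕ => 1 - x ^ (n + 1)) (mul_OO hx) hm
  unfold PP OO
  rw [← h, ← ho]

lemma OO_mul {x : ℂ} (hx : ‖x‖ < 1) : OO x * OO (-x) = OO (x ^ 2) := by
  rw [OO, OO, OO, ← (mul_OO hx).tprod_mul (mul_OO (neg_lt' hx))]
  refine tprod_congr fun k => ?_
  rw [Odd.neg_pow ⟨k, rfl⟩, ← pow_mul]; ring

lemma PP_plus {x : ℂ} (hx : ‖x‖ < 1) : PP x * ∏' n : ℕ, (1 + x ^ (n + 1)) = PP (x ^ 2) := by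
  rw [PP, PP, ← (multipliable_one_sub_pow hx).tprod_mul (mul_plus hx)]
  refine tprod_congr fun k => ?_
  rw [← pow_mul]; ring

lemma PP_ne {x : ℂ} (hx : ‖x‖ < 1) : PP x ≠ 0 := by
  refine tprod_one_add_ne_zero_of_summable (f := fun n : ℕ => - x ^ (n + 1)) ?_ ?_
  · intro i h
    have h1 : x ^ (i + 1) = 1 := by linear_combination -h
    have h2 : ‖x ^ (i + 1)‖ < 1 := by
      rw [norm_pow]; exact pow_lt_one₀ (norm_nonneg _) hx (by simp)
    rw [h1] at h2; simp at h2
  · simpa using sum_pow_succ hx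

lemma PP_triple {x : ℂ} (hx : ‖x‖ < 1) :
    PP x * PP (-x) * PP (x ^ 4) = PP (x ^ 2) ^ 3 := by
  have h1 := PP_eq hx
  have h2 := PP_eq (neg_lt' hx)
  have h3 := PP_eq (sq_lt hx)
  have h4 := OO_mul hx
  rw [neg_sq] at h2
  rw [← pow_mul] at h3
  norm_num at h3
  rw [h1, h2, mul_mul_mul_comm, h4]
  linear_combination - PP (x ^ 2) ^ 2 * h3

/-- `p = e^{πiτ}` has norm less than one. -/
lemma qh_lt (τ : UpperHalfPlane) : ‖qh τ‖ < 1 := by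
  rw [qh, Complex.norm_exp]
  simp only [Real.exp_lt_one_iff]
  have := mul_pos Real.pi_pos τ.im_pos
  simp
  exact this

lemma qq_eq (τ : ℂ) : qq τ = qh τ ^ 2 := by
  rw [qq, qh, ← Complex.exp_nat_mul]; congr 1; push_cast; ring

/-- The first eta quotient, in terms of `p`. -/
noncomputable def A (τ : UpperHalfPlane) : ℂ := qh τ * PP (qh τ ^ 2) ^ 16 / PP (qh τ) ^ 8
noncomputable def B (τ : UpperHalfPlane) : ℂ := PP (qh τ ^ 2) ^ 16 / PP (qh τ ^ 4) ^ 8 / 16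
noncomputable def C (τ : UpperHalfPlane) : ℂ :=
  - qh τ * (PP (qh τ) ^ 8 * PP (qh τ ^ 4) ^ 8) / PP (qh τ ^ 2) ^ 8

lemma theta1_eq (τ : UpperHalfPlane) : theta1 τ * PP (qq τ) =
    2 * Complex.exp (π * Complex.I * τ / 4) * PP (qq τ ^ 2) ^ 2 := by
  have hq : ‖qq τ‖ < 1 := by rw [qq_eq]; exact sq_lt (qh_lt τ)
  have h := PP_plus hq
  have h2 : ∏' j : ℕ, ((1 - qq τ ^ (j + 1)) * (1 + qq τ ^ (j + 1)) ^ 2) =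
      PP (qq τ) * (∏' n : ℕ, (1 + qq τ ^ (n + 1))) ^ 2 := by
    rw [(multipliable_one_sub_pow hq).tprod_mul ((mul_plus hq).pow 2), (mul_plus hq).tprod_pow, PP]
  rw [theta1, h2, ← h]; ring

lemma theta3_eq (τ : UpperHalfPlane) : theta3 τ = PP (qq τ) * OO (- qh τ) ^ 2 := by
  have hq : ‖qq τ‖ < 1 := by rw [qq_eq]; exact sq_lt (qh_lt τ)
  have h3 : ∀ j : ℕ, (1 - qq τ ^ (j + 1)) * (1 + qh τ ^ (2 * j + 1)) ^ 2 =
      (1 - qq τ ^ (j + 1)) * (1 - (- qh τ) ^ (2 * j + 1)) ^ 2 := by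
    intro j
    rw [Odd.neg_pow ⟨j, rfl⟩]; ring
  have hO := mul_OO (neg_lt' (qh_lt τ))
  rw [theta3, tprod_congr h3, (multipliable_one_sub_pow hq).tprod_mul (hO.pow 2), hO.tprod_pow]
  rfl

lemma eps_eq (τ : UpperHalfPlane) : A τ = epsilon2 τ := by
  have hx := qh_lt τ
  have hP0 := PP_ne hx
  have hP1 := PP_ne (sq_lt hx)
  have h1 := theta1_eq τ
  have h3 := theta3_eq τ
  rw [qq_eq, ← pow_mul] at h1
  rw [qq_eq] at h3
  norm_num at h1
  have t := PP_triple hx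
  have h2 := PP_eq (neg_lt' hx)
  rw [neg_sq] at h2
  have e : Complex.exp (π * Complex.I * τ / 4) ^ 4 = qh τ := by
    rw [qh, ← Complex.exp_nat_mul]; congr 1; push_cast; ring
  rw [h2] at t
  have t' : PP (qh τ) * OO (-qh τ) * PP (qh τ ^ 4) = PP (qh τ ^ 2) ^ 2 := by
    apply mul_right_cancel₀ hP1
    linear_combination t
  have key : theta1 τ * theta3 τ * PP (qh τ) ^ 2 =
      2 * Complex.exp (π * Complex.I * τ / 4) * PP (qh τ ^ 2) ^ 4 := by
    rw [h3]
    linear_combination (OO (-qh τ) ^ 2 * PP (qh τ) ^ 2) * h1 +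
      2 * Complex.exp (π * Complex.I * τ / 4) *
        (PP (qh τ) * OO (-qh τ) * PP (qh τ ^ 4) + PP (qh τ ^ 2) ^ 2) * t'
  have key4 := congrArg (· ^ 4) key
  simp only [mul_pow, e] at key4
  rw [A, epsilon2, div_eq_div_iff (pow_ne_zero _ hP0) (by norm_num)]
  linear_combination -key4

/-- eighth power of eta -/
lemma eta8 {z : ℂ} : ModularForm.eta z ^ 8 = Complex.exp (2 * π * Complex.I * z / 3) *
    PP (Complex.exp (2 * π * Complex.I * z)) ^ 8 := by
  rw [ModularForm.eta, mul_pow]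
  congr 1
  · rw [Function.Periodic.qParam, ← Complex.exp_nat_mul]; congr 1; push_cast; ring
  · rw [PP]
    simp [eta_q, Function.Periodic.qParam]

lemma eta8_S {z : ℂ} (hz : 0 < z.im) : ModularForm.eta (-1 / z) ^ 8 = z ^ 4 * ModularForm.eta z ^ 8 := by
  have h := eta_comp_eq_csqrt_I_inv hz
  have hz0 : z ≠ 0 := by rintro rfl; simp at hz
  have hs : ∀ w : ℂ, w ≠ 0 → Complex.sqrt w ^ 8 = w ^ 4 := by
    intro w hw
    rw [_root_.sqrt_eq_exp hw, ← Complex.exp_nat_mul]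
    rw [show ((8 : ℕ) : ℂ) * (Complex.log w / 2) = (4 : ℕ) * Complex.log w by push_cast; ring,
      Complex.exp_nat_mul, Complex.exp_log hw]
  simp only [Function.comp_apply, Pi.smul_apply, Pi.mul_apply, smul_eq_mul] at h
  rw [h, mul_pow, mul_pow, inv_pow, hs _ hz0, hs _ Complex.I_ne_zero, Complex.I_pow_four]
  simp

lemma half_im (τ : UpperHalfPlane) : 0 < ((τ : ℂ) / 2).im := by
  have := τ.im_pos
  simp; simpa using this

lemma two_im (τ : UpperHalfPlane) : 0 < (2 * (τ : ℂ)).im := by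
  have := τ.im_pos
  simp; simpa using this

lemma e1 (τ : UpperHalfPlane) : ModularForm.eta τ ^ 8 = Complex.exp (π * Complex.I * τ / 3) ^ 2 * PP (qh τ ^ 2) ^ 8 := by
  rw [eta8, ← qq_eq, qq, ← Complex.exp_nat_mul]; congr 2; push_cast; ring

lemma e2 (τ : UpperHalfPlane) : ModularForm.eta ((τ : ℂ) / 2) ^ 8 =
    Complex.exp (π * Complex.I * τ / 3) * PP (qh τ) ^ 8 := by
  rw [eta8, qh]
  congr 2
  · ring
  · congr 2; ring

lemma e3 (τ : UpperHalfPlane) : ModularForm.eta (2 * (τ : ℂ)) ^ 8 =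
    Complex.exp (π * Complex.I * τ / 3) ^ 4 * PP (qh τ ^ 4) ^ 8 := by
  rw [eta8, qh, ← Complex.exp_nat_mul, ← Complex.exp_nat_mul]
  congr 2
  · push_cast; ring
  · congr 2; push_cast; ring

lemma r3 (τ : UpperHalfPlane) : Complex.exp (π * Complex.I * τ / 3) ^ 3 = qh τ := by
  rw [qh, ← Complex.exp_nat_mul]; congr 1; push_cast; ring

lemma four_lt {x : ℂ} (hx : ‖x‖ < 1) : ‖x ^ 4‖ < 1 := by
  rw [norm_pow]; exact pow_lt_one₀ (norm_nonneg _) hx (by norm_num)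

lemma A_eta (τ : UpperHalfPlane) : A τ = (ModularForm.eta τ ^ 8) ^ 2 / ModularForm.eta ((τ : ℂ) / 2) ^ 8 := by
  have hP0 := PP_ne (qh_lt τ)
  have := Complex.exp_ne_zero (π * Complex.I * τ / 3)
  rw [e1, e2, A, ← r3]
  field_simp

lemma B_eta (τ : UpperHalfPlane) : B τ = (ModularForm.eta τ ^ 8) ^ 2 / ModularForm.eta (2 * (τ : ℂ)) ^ 8 / 16 := by
  have hP0 := PP_ne (four_lt (qh_lt τ))
  have := Complex.exp_ne_zero (π * Complex.I * τ / 3)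
  rw [e1, e3, B]
  field_simp

lemma C_eta (τ : UpperHalfPlane) : C τ = - (ModularForm.eta ((τ : ℂ) / 2) ^ 8 * ModularForm.eta (2 * (τ : ℂ)) ^ 8) / ModularForm.eta τ ^ 8 := by
  have hP0 := PP_ne (sq_lt (qh_lt τ))
  have := Complex.exp_ne_zero (π * Complex.I * τ / 3)
  rw [e1, e2, e3, C, ← r3]
  field_simp

lemma slash_S_apply (f : UpperHalfPlane → ℂ) (τ : UpperHalfPlane) :
    (f ∣[(4 : ℤ)] ModularGroup.S) τ = f (ModularGroup.S • τ) / (τ : ℂ) ^ 4 := by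
  rw [SL_slash_apply, ModularGroup.denom_S, _root_.zpow_neg, div_eq_mul_inv]
  norm_cast

lemma coe_S (τ : UpperHalfPlane) : ((ModularGroup.S • τ : UpperHalfPlane) : ℂ) = -1 / (τ : ℂ) := by
  rw [UpperHalfPlane.modular_S_smul]
  simp [neg_div]

lemma eS1 (τ : UpperHalfPlane) : ModularForm.eta ((ModularGroup.S • τ : UpperHalfPlane) : ℂ) ^ 8 = (τ : ℂ) ^ 4 * ModularForm.eta τ ^ 8 := by
  rw [coe_S, eta8_S τ.im_pos]

lemma eS2 (τ : UpperHalfPlane) : ModularForm.eta (((ModularGroup.S • τ : UpperHalfPlane) : ℂ) / 2) ^ 8 =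
    16 * (τ : ℂ) ^ 4 * ModularForm.eta (2 * (τ : ℂ)) ^ 8 := by
  rw [coe_S, show (-1 / (τ : ℂ)) / 2 = -1 / (2 * (τ : ℂ)) by field_simp, eta8_S (two_im τ)]
  ring

lemma eS3 (τ : UpperHalfPlane) : ModularForm.eta (2 * ((ModularGroup.S • τ : UpperHalfPlane) : ℂ)) ^ 8 =
    (τ : ℂ) ^ 4 / 16 * ModularForm.eta ((τ : ℂ) / 2) ^ 8 := by
  have := τ.ne_zero
  rw [coe_S, show 2 * (-1 / (τ : ℂ)) = -1 / ((τ : ℂ) / 2) by field_simp, eta8_S (half_im τ)]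
  ring

lemma A_S : A ∣[(4 : ℤ)] ModularGroup.S = B := by
  ext τ
  have h0 := τ.ne_zero
  have h1 := eta_ne_zero τ.im_pos
  have h2 := eta_ne_zero (half_im τ)
  have h3 := eta_ne_zero (two_im τ)
  rw [slash_S_apply, A_eta, B_eta, eS1, eS2]
  field_simp

lemma B_S : B ∣[(4 : ℤ)] ModularGroup.S = A := by
  ext τ
  have h0 := τ.ne_zero
  have h1 := eta_ne_zero τ.im_pos
  have h2 := eta_ne_zero (half_im τ)
  have h3 := eta_ne_zero (two_im τ)
  rw [slash_S_apply, A_eta, B_eta, eS1, eS3]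
  field_simp

lemma C_S : C ∣[(4 : ℤ)] ModularGroup.S = C := by
  ext τ
  have h0 := τ.ne_zero
  have h1 := eta_ne_zero τ.im_pos
  have h2 := eta_ne_zero (half_im τ)
  have h3 := eta_ne_zero (two_im τ)
  rw [slash_S_apply, C_eta, C_eta, eS1, eS2, eS3]
  field_simp

lemma slash_T_apply (f : UpperHalfPlane → ℂ) (τ : UpperHalfPlane) :
    (f ∣[(4 : ℤ)] ModularGroup.T) τ = f (ModularGroup.T • τ) := by
  rw [SL_slash_apply]
  have h : denom ModularGroup.T τ = 1 := by
    rw [ModularGroup.denom_apply]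
    simp [ModularGroup.coe_T]
  rw [h]; simp

lemma qh_T (τ : UpperHalfPlane) : qh ((ModularGroup.T • τ : UpperHalfPlane) : ℂ) = - qh τ := by
  rw [UpperHalfPlane.modular_T_smul, qh, qh]
  simp [mul_add, Complex.exp_add, Complex.exp_pi_mul_I]

lemma A_T : A ∣[(4 : ℤ)] ModularGroup.T = C := by
  ext τ
  have hx := qh_lt τ
  have h1 := PP_ne hx
  have h2 := PP_ne (sq_lt hx)
  have h3 := PP_ne (neg_lt' hx)
  have t := congrArg (· ^ 8) (PP_triple hx)
  simp only [mul_pow] at t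
  rw [slash_T_apply, A, C, qh_T, neg_sq, div_eq_div_iff (pow_ne_zero _ h3) (pow_ne_zero _ h2)]
  linear_combination qh τ * t

lemma C_T : C ∣[(4 : ℤ)] ModularGroup.T = A := by
  ext τ
  have hx := qh_lt τ
  have h1 := PP_ne hx
  have h2 := PP_ne (sq_lt hx)
  have h3 := PP_ne (neg_lt' hx)
  have t := congrArg (· ^ 8) (PP_triple hx)
  simp only [mul_pow] at t
  rw [slash_T_apply, A, C, qh_T, neg_sq, neg_neg, Even.neg_pow (by decide),
    div_eq_div_iff (pow_ne_zero _ h2) (pow_ne_zero _ h1)]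
  linear_combination qh τ * t

lemma B_T : B ∣[(4 : ℤ)] ModularGroup.T = B := by
  ext τ
  rw [slash_T_apply, B, B, qh_T, neg_sq, Even.neg_pow (by decide)]

/-- The orbit of `A`, indexed by the parities of the top row. -/
noncomputable def orb (a b : ZMod 2) : UpperHalfPlane → ℂ := if b = 0 then A else if a = 0 then B else C

lemma orb_S (a b : ZMod 2) (h : a ≠ 0 ∨ b ≠ 0) :
    orb a b ∣[(4 : ℤ)] ModularGroup.S = orb b (-a) := by
  have z : ∀ t : ZMod 2, t = 0 ∨ t = 1 := by decide
  rcases z a with rfl | rfl <;> rcases z b with rfl | rfl <;>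
    simp [orb, A_S, B_S, C_S] at h ⊢

lemma orb_T (a b : ZMod 2) (h : a ≠ 0 ∨ b ≠ 0) :
    orb a b ∣[(4 : ℤ)] ModularGroup.T = orb a (a + b) := by
  have h2 : (1 + 1 : ZMod 2) = 0 := by decide
  have z : ∀ t : ZMod 2, t = 0 ∨ t = 1 := by decide
  rcases z a with rfl | rfl <;> rcases z b with rfl | rfl <;>
    simp [orb, A_T, B_T, C_T, h2] at h ⊢

lemma row_ne (g : Matrix.SpecialLinearGroup (Fin 2) ℤ) :
    ((g 0 0 : ℤ) : ZMod 2) ≠ 0 ∨ ((g 0 1 : ℤ) : ZMod 2) ≠ 0 := by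
  by_contra! h
  have hd := congrArg (Int.cast : ℤ → ZMod 2) (Matrix.det_fin_two g.1 ▸ g.2)
  push_cast at hd
  rw [h.1, h.2] at hd
  simp at hd

lemma A_slash (g : Matrix.SpecialLinearGroup (Fin 2) ℤ) :
    A ∣[(4 : ℤ)] g = orb ((g 0 0 : ℤ) : ZMod 2) ((g 0 1 : ℤ) : ZMod 2) := by
  have hg : g ∈ Subgroup.closure {ModularGroup.S, ModularGroup.T} := by
    simp [SpecialLinearGroup.SL2Z_generators]
  have stepS : ∀ x : Matrix.SpecialLinearGroup (Fin 2) ℤ,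
      orb ((x 0 0 : ℤ) : ZMod 2) ((x 0 1 : ℤ) : ZMod 2) ∣[(4 : ℤ)] ModularGroup.S =
      orb (((x * ModularGroup.S) 0 0 : ℤ) : ZMod 2)
        (((x * ModularGroup.S) 0 1 : ℤ) : ZMod 2) := by
    intro x
    rw [orb_S _ _ (row_ne x)]
    simp only [Matrix.SpecialLinearGroup.coe_mul, ModularGroup.coe_S, Matrix.mul_apply,
      Fin.sum_univ_two]
    simp
  have stepT : ∀ x : Matrix.SpecialLinearGroup (Fin 2) ℤ,
      orb ((x 0 0 : ℤ) : ZMod 2) ((x 0 1 : ℤ) : ZMod 2) ∣[(4 : ℤ)] ModularGroup.T =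
      orb (((x * ModularGroup.T) 0 0 : ℤ) : ZMod 2)
        (((x * ModularGroup.T) 0 1 : ℤ) : ZMod 2) := by
    intro x
    rw [orb_T _ _ (row_ne x)]
    simp only [Matrix.SpecialLinearGroup.coe_mul, ModularGroup.coe_T, Matrix.mul_apply,
      Fin.sum_univ_two]
    simp
  induction hg using Subgroup.closure_induction_right with
  | one => simp [orb]
  | mul_right x hx y hy ih =>
    rw [SlashAction.slash_mul, ih]
    rcases hy with rfl | rfl
    · exact stepS x
    · exact stepT x
  | mul_inv_cancel x hx y hy ih =>
    rw [SlashAction.slash_mul, ih]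
    rcases hy with rfl | rfl
    · have h := stepS (x * ModularGroup.S⁻¹)
      rw [inv_mul_cancel_right] at h
      rw [← h, ← SlashAction.slash_mul, mul_inv_cancel, SlashAction.slash_one]
    · have h := stepT (x * ModularGroup.T⁻¹)
      rw [inv_mul_cancel_right] at h
      rw [← h, ← SlashAction.slash_mul, mul_inv_cancel, SlashAction.slash_one]

lemma qh_tendsto : Tendsto (fun τ : UpperHalfPlane => qh τ) atImInfty (𝓝 0) := by
  refine (UpperHalfPlane.qParam_tendsto_atImInfty (h := 2) two_pos).congr fun τ => ?_
  rw [Function.Periodic.qParam, qh]; congr 1; push_cast; ring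

lemma PP_tendsto : Tendsto PP (𝓝 0) (𝓝 1) := by
  have h : ContinuousAt PP 0 :=
    (differentiableOn_tprod_one_sub_pow.differentiableAt
      (Metric.ball_mem_nhds 0 one_pos)).continuousAt
  have h0 : PP 0 = 1 := by simp [PP]
  simpa [ContinuousAt, h0] using h

lemma P1 : Tendsto (fun τ : UpperHalfPlane => PP (qh τ)) atImInfty (𝓝 1) := PP_tendsto.comp qh_tendsto
lemma P2 : Tendsto (fun τ : UpperHalfPlane => PP (qh τ ^ 2)) atImInfty (𝓝 1) :=
  PP_tendsto.comp (by simpa using qh_tendsto.pow 2)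
lemma P4 : Tendsto (fun τ : UpperHalfPlane => PP (qh τ ^ 4)) atImInfty (𝓝 1) :=
  PP_tendsto.comp (by simpa using qh_tendsto.pow 4)

lemma bdd_of_tendsto {f : UpperHalfPlane → ℂ} {c : ℂ} (h : Tendsto f atImInfty (𝓝 c)) :
    IsBoundedAtImInfty f := by
  rw [IsBoundedAtImInfty, BoundedAtFilter]
  exact h.isBigO_one ℝ

lemma A_bdd : IsBoundedAtImInfty A :=
  bdd_of_tendsto ((qh_tendsto.mul (P2.pow 16)).div (P1.pow 8) (by simp))
lemma B_bdd : IsBoundedAtImInfty B :=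
  bdd_of_tendsto (((P2.pow 16).div (P4.pow 8) (by simp)).div_const 16)
lemma C_bdd : IsBoundedAtImInfty C :=
  bdd_of_tendsto ((qh_tendsto.neg.mul ((P1.pow 8).mul (P4.pow 8))).div (P2.pow 8) (by simp))

lemma orb_bdd (a b : ZMod 2) : IsBoundedAtImInfty (orb a b) := by
  rw [orb]; split_ifs
  exacts [A_bdd, B_bdd, C_bdd]

open scoped Manifold in
lemma A_holo : MDiff A := by
  rw [UpperHalfPlane.mdifferentiable_iff]
  have h : DifferentiableOn ℂ (fun z : ℂ => (ModularForm.eta z ^ 8) ^ 2 / ModularForm.eta (z / 2) ^ 8)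
      upperHalfPlaneSet := by
    intro z hz
    have hz2 : 0 < (z / 2).im := half_im ⟨z, hz⟩
    have d1 := differentiableAt_eta_of_mem_upperHalfPlaneSet hz
    have d2 := differentiableAt_eta_of_mem_upperHalfPlaneSet hz2
    have d3 : DifferentiableAt ℂ (fun z : ℂ => ModularForm.eta (z / 2)) z :=
      DifferentiableAt.comp z (f := fun z : ℂ => z / 2) d2 (by fun_prop)
    exact (((d1.pow 8).pow 2).div (d3.pow 8)
      (pow_ne_zero _ (eta_ne_zero hz2))).differentiableWithinAt
  refine h.congr fun z hz => ?_
  rw [Function.comp_apply, A_eta, ofComplex_apply_of_im_pos hz]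

end EpsTwo

/-- `ε₂` is a modular form of weight `4` over `Γ^0(2)`: there is a modular form of weight `4`
over `Γ^0(2)` (holomorphic on `ℍ`, holomorphic at the cusps, transforming with weight `4` under
`Γ^0(2)`) that coincides with `ε₂` on the upper half-plane. -/
theorem epsilon2_modular_form_weight_four_GammaUpper0_two :
    ∃ F : ModularForm (GammaUpper0 2) 4, ∀ τ : ℍ, F τ = epsilon2 (τ : ℂ) := by
  refine ⟨{ toFun := EpsTwo.A, slash_action_eq' := ?_, holo' := EpsTwo.A_holo,
            bdd_at_cusps' := ?_ }, EpsTwo.eps_eq⟩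
  · rintro γ ⟨g, hg, rfl⟩
    have hb : ((g 0 1 : ℤ) : ZMod 2) = 0 := by
      simpa using! hg
    have h := EpsTwo.A_slash g
    rw [EpsTwo.orb, if_pos hb] at h
    exact h
  · intro c hc
    have hc' : IsCusp c (mapGL ℝ : Matrix.SpecialLinearGroup (Fin 2) ℤ →* _).range :=
      hc.mono (Subgroup.map_le_range _ _)
    rw [OnePoint.isBoundedAt_iff_forall_SL2Z hc']
    intro γ _
    rw [EpsTwo.A_slash]
    exact EpsTwo.orb_bdd _ _
end

section
/- The Eisenstein series E2 satisfies the quasi-modular transformation laws E2(τ+1) = E2(τ) and E2(-1/τ) = τ^2 E2(τ) - 6√(-1) τ/π for every τ in the upper half-plane. -/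
open Complex Real

/-- The sum-of-divisors function `σ₁(n) = Σ_{d ∣ n} d`. -/
def sigma1 (n : ℕ) : ℕ := ∑ d ∈ n.divisors, d

/-- The quasi-modular Eisenstein series `E₂(τ) = 1 - 24 Σ_{n≥1} σ₁(n) e^{2πinτ}`. -/
noncomputable def E2 (τ : ℂ) : ℂ :=
  1 - 24 * ∑' n : ℕ, (sigma1 (n + 1) : ℂ) * Complex.exp (2 * π * Complex.I * τ) ^ (n + 1)

lemma E2_eq_mathlib (z : UpperHalfPlane) : E2 (z : ℂ) = EisensteinSeries.E2 z := by
  rw [EisensteinSeries.E2_eq_tsum_cexp, E2,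
    tsum_pnat_eq_tsum_succ (f := fun n : ℕ ↦
      ((ArithmeticFunction.sigma 1 n : ℕ) : ℂ) * Complex.exp (2 * π * Complex.I * z) ^ n)]
  simp [sigma1, ArithmeticFunction.sigma_one_apply]

/-- The Eisenstein series `E₂` satisfies the quasi-modular transformation laws
`E₂(τ+1) = E₂(τ)` and `E₂(-1/τ) = τ² E₂(τ) - 6√(-1) τ/π` for every `τ` in the upper
half-plane. -/
theorem E2_transformation (τ : ℂ) (hτ : 0 < τ.im) :
    E2 (τ + 1) = E2 τ ∧
    E2 (-1 / τ) = τ ^ 2 * E2 τ - 6 * Complex.I * τ / (π : ℂ) := by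
  constructor
  · have h : Complex.exp (2 * π * Complex.I * (τ + 1)) = Complex.exp (2 * π * Complex.I * τ) := by
      rw [mul_add, mul_one, Complex.exp_add, Complex.exp_two_pi_mul_I, mul_one]
    simp only [E2, h]
  · obtain ⟨z, rfl⟩ : ∃ z : UpperHalfPlane, (z : ℂ) = τ := ⟨⟨τ, hτ⟩, rfl⟩
    have hz : (z : ℂ) ≠ 0 := UpperHalfPlane.ne_zero z
    have hS : (-1 / (z : ℂ)) = ((ModularGroup.S • z : UpperHalfPlane) : ℂ) := by
      rw [UpperHalfPlane.modular_S_smul]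
      simp [neg_div, inv_neg]
    have hG := EisensteinSeries.G2_S_transform z
    have hpi : (π : ℂ) ≠ 0 := by exact_mod_cast Real.pi_ne_zero
    rw [hS, E2_eq_mathlib, E2_eq_mathlib]
    simp only [EisensteinSeries.E2, Pi.smul_apply, smul_eq_mul, riemannZeta_two]
    rw [hG]
    field_simp
    ring
end

section
/- Every modular form f of weight 10 for the full modular group SL2(ℤ) is a constant multiple of E4(τ) E6(τ): there exists c ∈ ℂ with f(τ) = c · E4(τ) E6(τ) for all τ in the upper half-plane. -/
open Complex Real

local notation "SL(2,ℤ)" => Matrix.SpecialLinearGroup (Fin 2) ℤ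
local notation "ℍ" => UpperHalfPlane

/-- The divisor power sum `σ_k(n) = Σ_{d ∣ n} d^k`. -/
def sigma' (k n : ℕ) : ℕ := ∑ d ∈ n.divisors, d ^ k

/-- The Eisenstein series `E₄(τ) = 1 + 240 Σ_{n≥1} σ₃(n) e^{2πinτ}`. -/
noncomputable def E4 (τ : ℂ) : ℂ :=
  1 + 240 * ∑' n : ℕ, (sigma' 3 (n + 1) : ℂ) * Complex.exp (2 * π * Complex.I * τ) ^ (n + 1)

/-- The Eisenstein series `E₆(τ) = 1 - 504 Σ_{n≥1} σ₅(n) e^{2πinτ}`. -/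
noncomputable def E6 (τ : ℂ) : ℂ :=
  1 - 504 * ∑' n : ℕ, (sigma' 5 (n + 1) : ℂ) * Complex.exp (2 * π * Complex.I * τ) ^ (n + 1)

theorem sigma_tsum (k : ℕ) (τ : ℍ) :
    ∑' n : ℕ, (sigma' (k - 1) (n + 1) : ℂ) *
        Complex.exp (2 * π * Complex.I * (τ : ℂ)) ^ (n + 1) =
      ∑' n : ℕ+, (ArithmeticFunction.sigma (k - 1) n : ℂ) *
        Complex.exp (2 * π * Complex.I * (τ : ℂ)) ^ ((n : ℕ) : ℤ) := by
  rw [← tsum_pnat_eq_tsum_succ (f := fun n : ℕ => (sigma' (k - 1) n : ℂ) *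
    Complex.exp (2 * π * Complex.I * (τ : ℂ)) ^ n)]
  refine tsum_congr fun n => ?_
  rw [zpow_natCast, ArithmeticFunction.sigma_apply]
  rfl

theorem E4_eq (τ : ℍ) : E4 (τ : ℂ) = ModularForm.E (k := 4) (by norm_num) τ := by
  rw [EisensteinSeries.q_expansion_bernoulli _ ⟨2, rfl⟩, ← sigma_tsum 4 τ, E4,
    show bernoulli 4 = -1 / 30 by decide +kernel]
  norm_num

theorem E6_eq (τ : ℍ) : E6 (τ : ℂ) = ModularForm.E (k := 6) (by norm_num) τ := by
  rw [EisensteinSeries.q_expansion_bernoulli _ ⟨3, rfl⟩, ← sigma_tsum 6 τ, E6,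
    show bernoulli 6 = 1 / 42 by decide +kernel]
  norm_num

theorem weight_ten_aux (f : ModularForm (MonoidHom.range (Matrix.SpecialLinearGroup.mapGL ℝ :
      SL(2,ℤ) →* Matrix.GeneralLinearGroup (Fin 2) ℝ)) 10) :
    ∃ c : ℂ, ∀ τ : ℍ, f τ = c * (ModularForm.E (k := 4) (by norm_num) τ *
      ModularForm.E (k := 6) (by norm_num) τ) := by
  let g := (ModularForm.E (k := 4) (by norm_num)).mul
    (ModularForm.E (k := 6) (by norm_num))
  have hg : g ≠ 0 := by
    intro h
    have h1 := ModularForm.qExpansion_mul one_pos one_mem_strictPeriods_SL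
      (ModularForm.E (k := 4) (by norm_num)) (ModularForm.E (k := 6) (by norm_num))
    change UpperHalfPlane.qExpansion 1 g = _ at h1
    have h2 := congrArg (PowerSeries.coeff 0) h1
    rw [h, PowerSeries.coeff_mul, Finset.Nat.antidiagonal_zero, Finset.sum_singleton] at h2
    rw [EisensteinSeries.E_qExpansion_coeff_zero _ ⟨2, rfl⟩,
      EisensteinSeries.E_qExpansion_coeff_zero _ ⟨3, rfl⟩] at h2
    simp [UpperHalfPlane.qExpansion_zero] at h2
  have hr : Module.rank ℂ (ModularForm (MonoidHom.range (Matrix.SpecialLinearGroup.mapGL ℝ :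
      SL(2,ℤ) →* Matrix.GeneralLinearGroup (Fin 2) ℝ)) ((10 : ℕ) : ℤ)) = 1 := by
    rw [ModularForm.dimension_level_one 10 ⟨5, rfl⟩]
    simp [Nat.ModEq]
  obtain ⟨c, hc⟩ := (finrank_eq_one_iff_of_nonzero' g hg).mp
    (Module.rank_eq_one_iff_finrank_eq_one.mp hr) f
  exact ⟨c, fun τ => (DFunLike.congr_fun hc τ).symm⟩

/-- Every modular form of weight `10` for the full modular group `SL(2,ℤ)` is a constant
multiple of `E₄ E₆`. -/
theorem weight_ten_eq_const_mul_E4_E6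
    (f : ModularForm (⊤ : Subgroup SL(2,ℤ)) 10) :
    ∃ c : ℂ, ∀ τ : ℍ, f τ = c * E4 (τ : ℂ) * E6 (τ : ℂ) := by
  let g : ModularForm (MonoidHom.range (Matrix.SpecialLinearGroup.mapGL ℝ :
      SL(2,ℤ) →* Matrix.GeneralLinearGroup (Fin 2) ℝ)) 10 :=
    ModularForm.mcast rfl f (by rw [MonoidHom.range_eq_map])
  obtain ⟨c, hc⟩ := weight_ten_aux g
  refine ⟨c, fun τ => ?_⟩
  rw [E4_eq, E6_eq, mul_assoc]
  exact hc τ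
end

section
/- Every modular form f of weight 8 for the full modular group SL2(ℤ) is a constant multiple of E4(τ)^2: there exists c ∈ ℂ with f(τ) = c · E4(τ)^2 for all τ in the upper half-plane. -/
open Complex Real

local notation "SL(2,ℤ)" => Matrix.SpecialLinearGroup (Fin 2) ℤ
local notation "ℍ" => UpperHalfPlane

open scoped MatrixGroups in
lemma E4_eq_eisenstein (τ : ℍ) : E4 (τ : ℂ) = ModularForm.E₄ τ := by
  have h := EisensteinSeries.q_expansion_bernoulli (k := 4) (by norm_num) ⟨2, rfl⟩ τ
  have hb : bernoulli 4 = -1 / 30 := by decide +kernel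
  refine Eq.trans ?_ h.symm
  rw [hb, E4, ← tsum_pnat_eq_tsum_succ
    (f := fun n : ℕ ↦ (sigma' 3 n : ℂ) * Complex.exp (2 * π * Complex.I * τ) ^ n)]
  have : ∀ n : ℕ+, (sigma' 3 n : ℂ) * Complex.exp (2 * π * Complex.I * τ) ^ (n : ℕ) =
      (ArithmeticFunction.sigma (4 - 1) n : ℂ) *
        Complex.exp (2 * π * Complex.I * τ) ^ ((n : ℕ) : ℤ) := by
    intro n
    simp [sigma', ArithmeticFunction.sigma_apply]
  simp_rw [this]
  push_cast
  ring

open scoped MatrixGroups in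
lemma exists_smul_E4_sq (f : ModularForm 𝒮ℒ 8) :
    ∃ c : ℂ, ∀ τ : ℍ, f τ = c * ModularForm.E₄ τ ^ 2 := by
  have hr : Module.rank ℂ (ModularForm 𝒮ℒ (8 : ℕ)) = 1 := by
    rw [ModularForm.dimension_level_one 8 ⟨4, rfl⟩]
    norm_num [Nat.ModEq]
  have hne : ModularForm.mul ModularForm.E₄ ModularForm.E₄ ≠ 0 := by
    intro h
    apply EisensteinSeries.E_ne_zero (k := 4) (by norm_num) ⟨2, rfl⟩
    ext τ
    have h0 : ModularForm.E₄ τ * ModularForm.E₄ τ = 0 := DFunLike.congr_fun h τ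
    exact mul_self_eq_zero.mp h0
  obtain ⟨c, hc⟩ := (finrank_eq_one_iff_of_nonzero'
    (ModularForm.mul ModularForm.E₄ ModularForm.E₄ : ModularForm 𝒮ℒ 8) hne).mp
    (Module.rank_eq_one_iff_finrank_eq_one.mp hr) f
  refine ⟨c, fun τ ↦ ?_⟩
  rw [← hc, sq]
  rfl

/-- Every modular form of weight `8` for the full modular group `SL(2,ℤ)` is a constant
multiple of `E₄²`. -/
theorem weight_eight_eq_const_mul_E4_sq
    (f : ModularForm (⊤ : Subgroup SL(2,ℤ)) 8) :
    ∃ c : ℂ, ∀ τ : ℍ, f τ = c * E4 (τ : ℂ) ^ 2 := by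
  obtain ⟨c, hc⟩ := exists_smul_E4_sq (f.copy f rfl (by simp [MonoidHom.range_eq_map]))
  refine ⟨c, fun τ ↦ ?_⟩
  rw [E4_eq_eisenstein]
  exact hc τ
end
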